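/- arXiv:2312.14116 — 3 statements merged into one kernel-verified Lean document; each statement's English description precedes it below -/
import Mathlib

section
/- Let K be a field and I a nonzero ideal of K[x,y] with reduced minimal lexicographic Gröbner basis G = (g_0,…,g_s) (for x ≺ y) and associated detaching sequence (A_i). Then for every n ≥ n_0, the detaching basis (A_{n_s},…,A_n) of I in degree n is itself a (in general non-minimal) Gröbner basis of I for the lexicographic order x ≺ y. -/
noncomputable section

open Polynomial

/-- Bivariate polynomials `k[x][y]`: the inner `X` is `x`, the outer `X` is `y`. -/
abbrev Biv (k : Type*) [CommRing k] : Type _ := Polynomial (Polynomial k)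

variable {k : Type*} [CommRing k]

/-- The leading monomial of `f`, as the pair (y-exponent, x-exponent), for the
lexicographic order induced by `x ≺ y`. -/
def lmon (f : Biv k) : ℕ × ℕ := (f.natDegree, f.leadingCoeff.natDegree)

/-- Divisibility of monomials: `x^{p.2} y^{p.1}` divides `x^{q.2} y^{q.1}`. -/
def monDvd (p q : ℕ × ℕ) : Prop := p.1 ≤ q.1 ∧ p.2 ≤ q.2

/-- Lexicographic comparison of monomials, `y`-exponent first. -/
def monLt (p q : ℕ × ℕ) : Prop := p.1 < q.1 ∨ (p.1 = q.1 ∧ p.2 < q.2)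

/-- The monomial `x^{m.2} y^{m.1}` occurs in `f` (has a nonzero coefficient). -/
def occursIn (f : Biv k) (m : ℕ × ℕ) : Prop := (f.coeff m.1).coeff m.2 ≠ 0

/-- `G` is a Gröbner basis of `I` for the lexicographic order with `x ≺ y`:
its elements are nonzero elements of `I`, and the leading monomial of any nonzero
element of `I` is divisible by the leading monomial of some element of `G`. -/
def IsGB (G : List (Biv k)) (I : Ideal (Biv k)) : Prop :=
  (∀ g ∈ G, g ≠ 0 ∧ g ∈ I) ∧
  ∀ f ∈ I, f ≠ 0 → ∃ g ∈ G, monDvd (lmon g) (lmon f)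

/-- `f` is monic w.r.t. lex `x ≺ y`: the coefficient of its leading monomial is `1`. -/
def lexMonic (f : Biv k) : Prop := f.leadingCoeff.Monic

/-- `g 0, …, g s` is the reduced minimal lexicographic Gröbner basis of `I`,
listed in decreasing order of leading monomials. -/
def IsReducedGB {s : ℕ} (g : Fin (s + 1) → Biv k) (I : Ideal (Biv k)) : Prop :=
  IsGB (List.ofFn g) I ∧
  (∀ j, lexMonic (g j)) ∧
  (∀ j l, j ≠ l → ∀ m : ℕ × ℕ, occursIn (g j) m → ¬ monDvd (lmon (g l)) m) ∧
  (∀ j l : Fin (s + 1), j < l → monLt (lmon (g l)) (lmon (g j)))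

/-- Every monomial of `f` of `y`-degree `< i` is reduced w.r.t. the family `g`. -/
def reducedBelow {s : ℕ} (g : Fin (s + 1) → Biv k) (i : ℕ) (f : Biv k) : Prop :=
  ∀ m : ℕ × ℕ, m.1 < i → occursIn f m → ∀ j, ¬ monDvd (lmon (g j)) m

/-- `A` is the detaching sequence associated to the reduced Gröbner basis `g` of `I`:
`A i = 0` for `i < n_s`, `A (n_j) = g j`, and otherwise `A i` is obtained from
`y * A (i-1)` by reducing the terms of `y`-degree `< i` modulo `g`
(so `A i - y * A (i-1)` lies in `I` and has `y`-degree `< i`, and the part of `A i`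
of `y`-degree `< i` is reduced w.r.t. `g`). -/
def IsDetachingSeq {s : ℕ} (g : Fin (s + 1) → Biv k) (I : Ideal (Biv k))
    (A : ℕ → Biv k) : Prop :=
  (∀ i, i < (g (Fin.last s)).natDegree → A i = 0) ∧
  (∀ j, A ((g j).natDegree) = g j) ∧
  (∀ i, (g (Fin.last s)).natDegree ≤ i → (∀ j, (g j).natDegree ≠ i) →
    (A i - Polynomial.X * A (i - 1)) ∈ I ∧
    (A i - Polynomial.X * A (i - 1)).degree < (i : WithBot ℕ) ∧
    reducedBelow g i (A i))

/-!
Adding nonzero elements of `I` to a Gröbner basis of `I` gives a Gröbner basis of `I`, and the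
detaching basis contains `G`. So it is enough that each `A i` with `n_s ≤ i` is a nonzero element
of `I`. It is nonzero because its `y`-degree is exactly `i`: multiplying `A (i - 1)` by `y` raises
the `y`-degree by one, and the reduction only alters terms of `y`-degree `< i`.
-/

theorem degree_eq_add_one_of_degree_sub_X_mul_lt {R : Type*} [Ring R] {p q : R[X]}
    (h : (p - X * q).degree < q.degree + 1) : p.degree = q.degree + 1 := by
  have hq : q ≠ 0 := by
    rintro rfl
    simp at h
  have : Nontrivial R := Polynomial.nontrivial_iff.1 ⟨q, 0, hq⟩
  have hXq : (X * q).degree = q.degree + 1 := by rw [X_mul, degree_mul_X]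
  rw [← sub_add_cancel p (X * q), degree_add_eq_right_of_degree_lt (hXq ▸ h), hXq]

theorem IsGB.of_subset {G H : List (Biv k)} {I : Ideal (Biv k)} (hG : IsGB G I) (hGH : G ⊆ H)
    (hH : ∀ h ∈ H, h ≠ 0 ∧ h ∈ I) : IsGB H I := by
  refine ⟨hH, fun f hf hf0 => ?_⟩
  obtain ⟨g, hg, hdvd⟩ := hG.2 f hf hf0
  exact ⟨g, hGH hg, hdvd⟩

/-- The detaching basis `(A_{n_s}, …, A_n)` in degree `n`, where `n_s` is the `y`-degree of the
last member of `g`. For `n < n_s` truncated subtraction makes it the one-element list `[A_{n_s}]`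
instead of the empty list. -/
def detachingBasis {s : ℕ} (g : Fin (s + 1) → Biv k) (A : ℕ → Biv k) (n : ℕ) : List (Biv k) :=
  List.ofFn fun j : Fin (n - (g (Fin.last s)).natDegree + 1) =>
    A ((g (Fin.last s)).natDegree + (j : ℕ))

section DetachingSequence

variable {s : ℕ} {g : Fin (s + 1) → Biv k} {I : Ideal (Biv k)} {A : ℕ → Biv k} {i n : ℕ}

theorem mem_detachingBasis (hn : (g (Fin.last s)).natDegree ≤ n) {f : Biv k} :
    f ∈ detachingBasis g A n ↔ ∃ i, (g (Fin.last s)).natDegree ≤ i ∧ i ≤ n ∧ A i = f := by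
  rw [detachingBasis, List.mem_ofFn]
  constructor
  · rintro ⟨j, rfl⟩
    exact ⟨_, Nat.le_add_right _ _, by omega, rfl⟩
  · rintro ⟨i, hi, hin, rfl⟩
    exact ⟨⟨i - (g (Fin.last s)).natDegree, by omega⟩, by simp only [Nat.add_sub_cancel' hi]⟩

theorem IsReducedGB.antitone_natDegree (hg : IsReducedGB g I) :
    Antitone fun j => (g j).natDegree := by
  obtain ⟨-, -, -, hlt⟩ := hg
  refine antitone_iff_forall_lt.2 fun j l hjl => ?_
  rcases hlt j l hjl with h | h
  · exact h.le
  · exact h.1.le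

namespace IsDetachingSeq

theorem apply_natDegree (hA : IsDetachingSeq g I A) (j : Fin (s + 1)) :
    A (g j).natDegree = g j :=
  hA.2.1 j

theorem exists_eq_or_sub_X_mul_mem (hA : IsDetachingSeq g I A)
    (hi : (g (Fin.last s)).natDegree ≤ i) :
    (∃ j, (g j).natDegree = i + 1 ∧ A (i + 1) = g j) ∨
      A (i + 1) - X * A i ∈ I ∧ (A (i + 1) - X * A i).degree < ((i + 1 : ℕ) : WithBot ℕ) := by
  by_cases h : ∃ j, (g j).natDegree = i + 1
  · obtain ⟨j, hj⟩ := h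
    exact .inl ⟨j, hj, hj ▸ hA.apply_natDegree j⟩
  · obtain ⟨hmem, hdeg, -⟩ := hA.2.2 (i + 1) (Nat.le_succ_of_le hi) (not_exists.1 h)
    exact .inr ⟨hmem, hdeg⟩

theorem mem (hA : IsDetachingSeq g I A) (hgI : ∀ j, g j ∈ I)
    (hi : (g (Fin.last s)).natDegree ≤ i) : A i ∈ I := by
  induction i, hi using Nat.le_induction with
  | base => simpa only [hA.apply_natDegree] using hgI (Fin.last s)
  | succ i hi ih =>
    obtain ⟨j, -, hj⟩ | ⟨hsub, -⟩ := hA.exists_eq_or_sub_X_mul_mem hi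
    · exact hj ▸ hgI j
    · exact (Submodule.sub_mem_iff_left I (I.mul_mem_left X ih)).1 hsub

theorem degree_eq (hA : IsDetachingSeq g I A) (hg0 : ∀ j, g j ≠ 0)
    (hi : (g (Fin.last s)).natDegree ≤ i) : (A i).degree = i := by
  induction i, hi using Nat.le_induction with
  | base => rw [hA.apply_natDegree, degree_eq_natDegree (hg0 _)]
  | succ i hi ih =>
    obtain ⟨j, hdeg, hj⟩ | ⟨-, hlt⟩ := hA.exists_eq_or_sub_X_mul_mem hi
    · rw [hj, degree_eq_natDegree (hg0 j), hdeg]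
    · rw [Nat.cast_succ, ← ih] at hlt ⊢
      exact degree_eq_add_one_of_degree_sub_X_mul_lt hlt

theorem ofFn_subset_detachingBasis (hA : IsDetachingSeq g I A)
    (hanti : Antitone fun j => (g j).natDegree) (hn : (g 0).natDegree ≤ n) :
    List.ofFn g ⊆ detachingBasis g A n := by
  intro f hf
  obtain ⟨j, rfl⟩ := List.mem_ofFn.1 hf
  have hjn : (g j).natDegree ≤ n := (hanti (Fin.zero_le j)).trans hn
  have hlast : (g (Fin.last s)).natDegree ≤ (g j).natDegree := hanti (Fin.le_last j)
  exact (mem_detachingBasis (hlast.trans hjn)).2 ⟨_, hlast, hjn, hA.apply_natDegree j⟩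

end IsDetachingSeq

theorem detaching_basis_isGB_general (hg : IsGB (List.ofFn g) I)
    (hanti : Antitone fun j => (g j).natDegree) (hA : IsDetachingSeq g I A)
    (hn : (g 0).natDegree ≤ n) : IsGB (detachingBasis g A n) I := by
  refine hg.of_subset (hA.ofFn_subset_detachingBasis hanti hn) fun f hf => ?_
  have hgj (j : Fin (s + 1)) : g j ≠ 0 ∧ g j ∈ I := hg.1 _ (List.mem_ofFn.2 ⟨j, rfl⟩)
  have hlast : (g (Fin.last s)).natDegree ≤ n := (hanti (Fin.zero_le _)).trans hn
  obtain ⟨i, hi, -, rfl⟩ := (mem_detachingBasis hlast).1 hf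
  have hdeg : (A i).degree = i := hA.degree_eq (fun j => (hgj j).1) hi
  exact ⟨degree_ne_bot.1 (hdeg ▸ WithBot.natCast_ne_bot i), hA.mem (fun j => (hgj j).2) hi⟩

end DetachingSequence

/-- For a nonzero ideal `I` of `K[x,y]` with reduced minimal lexicographic
Gröbner basis `g = (g_0, …, g_s)` (for `x ≺ y`) and associated detaching sequence `A`,
for every `n ≥ n_0` the detaching basis `(A_{n_s}, …, A_n)` of `I` in degree `n` is
itself a (in general non-minimal) Gröbner basis of `I` for lex `x ≺ y`. -/
theorem detaching_basis_isGB {K : Type*} [Field K] {s : ℕ}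
    (I : Ideal (Biv K)) (hI : I ≠ ⊥)
    (g : Fin (s + 1) → Biv K) (hg : IsReducedGB g I)
    (A : ℕ → Biv K) (hA : IsDetachingSeq g I A)
    (n : ℕ) (hn : (g 0).natDegree ≤ n) :
    IsGB (List.ofFn fun j : Fin (n - (g (Fin.last s)).natDegree + 1) =>
      A ((g (Fin.last s)).natDegree + (j : ℕ))) I :=
  detaching_basis_isGB_general hg.1 hg.antitone_natDegree hA hn
end
end

section
/- Let K be a field and f_1,…,f_t ∈ K[x,y] (t ≥ 2), all of y-degree at most d_y, and suppose the coefficient of y^{d_y} in f_t is a nonzero element of K. Then every f in the ideal ⟨f_1,…,f_t⟩ with deg_y(f) < 2·d_y can be written as f = w_1·f_1 + … + w_t·f_t with w_1,…,w_t ∈ K[x,y] all of y-degree strictly less than d_y. -/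
noncomputable section

open Polynomial

variable {k : Type*} [CommRing k]

/-!
Let `g` be the generator whose coefficient of `y ^ d` is a unit. Division by `g` with remainder is
possible, so every other cofactor can be replaced by its remainder modulo `g`, the quotients being
absorbed into the cofactor of `g`. The product of `g` and its new cofactor is then the difference of
two polynomials of small degree, and since the leading coefficient of `g` is a unit, degrees add in
this product, which bounds the cofactor.
-/

section Semiring

variable {R : Type*} [Semiring R] {d e : ℕ}

lemma degree_mul_lt_of_lt_of_le {p q : R[X]} (hp : p.degree < d) (hq : q.degree ≤ e) :
    (p * q).degree < (d + e : ℕ) := by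
  rw [Nat.cast_add]
  calc (p * q).degree
      ≤ p.degree + q.degree := degree_mul_le p q
    _ ≤ p.degree + e := by gcongr
    _ < d + e := WithBot.add_lt_add_right (WithBot.natCast_ne_bot e) hp

lemma degree_lt_of_degree_mul_lt_of_isUnit_coeff {p g : R[X]} (hg : g.degree ≤ d)
    (hu : IsUnit (g.coeff d)) (hpg : (p * g).degree < (d + e : ℕ)) : p.degree < e := by
  nontriviality R
  by_cases hp : p = 0
  · simp [hp]
  have hgd : g.degree = d := degree_eq_of_le_of_coeff_ne_zero hg hu.ne_zero
  have hlead : g.leadingCoeff = g.coeff d := by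
    rw [leadingCoeff, natDegree_eq_of_degree_eq_some hgd]
  have hmul : p.leadingCoeff * g.leadingCoeff ≠ 0 := by
    rwa [hlead, ne_eq, hu.mul_left_eq_zero, leadingCoeff_eq_zero]
  rw [degree_mul' hmul, hgd, add_comm d, Nat.cast_add] at hpg
  exact lt_of_add_lt_add_right hpg

end Semiring

section CommRing

variable {R : Type*} [CommRing R] {d e : ℕ}

lemma exists_eq_mul_add_degree_lt_of_isUnit_coeff {g : R[X]} (hg : g.degree ≤ d)
    (hu : IsUnit (g.coeff d)) (p : R[X]) : ∃ q r : R[X], p = q * g + r ∧ r.degree < d := by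
  nontriviality R
  obtain ⟨c, hc⟩ := hu.exists_left_inv
  have hdeg : (C c * g).degree ≤ d := (smul_eq_C_mul (p := g) c ▸ degree_smul_le c g).trans hg
  have hmonic : (C c * g).Monic := monic_of_degree_le d hdeg (by rw [coeff_C_mul, hc])
  refine ⟨p /ₘ (C c * g) * C c, p %ₘ (C c * g), ?_, (degree_modByMonic_lt p hmonic).trans_le hdeg⟩
  linear_combination -modByMonic_add_div p (C c * g)

variable {ι : Type*} [Fintype ι] {f : ι → R[X]} {i₀ : ι}

lemma exists_sum_mul_eq_degree_lt_of_isUnit_coeff (hd : (f i₀).degree ≤ d)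
    (hu : IsUnit ((f i₀).coeff d)) (a : ι → R[X]) :
    ∃ w : ι → R[X], ∑ i, a i * f i = ∑ i, w i * f i ∧ ∀ i ≠ i₀, (w i).degree < d := by
  classical
  choose q r ha hr using fun i ↦ exists_eq_mul_add_degree_lt_of_isUnit_coeff hd hu (a i)
  have hsum : ∑ i, a i * f i = ∑ i, r i * f i + (∑ i, q i * f i) * f i₀ := by
    rw [Finset.sum_mul, ← Finset.sum_add_distrib]
    exact Finset.sum_congr rfl fun i _ ↦ by linear_combination f i * ha i
  refine ⟨r + Pi.single i₀ (∑ i, q i * f i), ?_, fun i hi ↦ ?_⟩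
  · rw [hsum]
    simp [add_mul, Finset.sum_add_distrib, Pi.single_apply]
  · simpa [hi] using hr i

lemma degree_lt_of_degree_sum_mul_lt_of_isUnit_coeff (hf : ∀ i ≠ i₀, (f i).degree ≤ e)
    (hd : (f i₀).degree ≤ d) (hu : IsUnit ((f i₀).coeff d)) {w : ι → R[X]}
    (hw : ∀ i ≠ i₀, (w i).degree < d) (hsum : (∑ i, w i * f i).degree < (d + e : ℕ)) :
    (w i₀).degree < e := by
  classical
  have hrest : (∑ i ∈ Finset.univ.erase i₀, w i * f i).degree < (d + e : ℕ) := by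
    refine (degree_sum_le _ _).trans_lt ((Finset.sup_lt_iff (WithBot.bot_lt_coe _)).2 ?_)
    intro i hi
    have hne := Finset.ne_of_mem_erase hi
    exact degree_mul_lt_of_lt_of_le (hw i hne) (hf i hne)
  refine degree_lt_of_degree_mul_lt_of_isUnit_coeff hd hu ?_
  rw [eq_sub_of_add_eq (Finset.add_sum_erase _ (fun i ↦ w i * f i) (Finset.mem_univ i₀))]
  exact (degree_sub_le _ _).trans_lt (max_lt hsum hrest)

theorem low_degree_membership_general (hf : ∀ i ≠ i₀, (f i).degree ≤ e)
    (hd : (f i₀).degree ≤ d) (hu : IsUnit ((f i₀).coeff d)) {h : R[X]}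
    (hmem : h ∈ Ideal.span (Set.range f)) (hdeg : h.degree < (d + e : ℕ)) :
    ∃ w : ι → R[X], (∀ i ≠ i₀, (w i).degree < d) ∧ (w i₀).degree < e ∧ h = ∑ i, w i * f i := by
  obtain ⟨a, rfl⟩ := Ideal.mem_span_range_iff_exists_fun.1 hmem
  obtain ⟨w, haw, hw⟩ := exists_sum_mul_eq_degree_lt_of_isUnit_coeff hd hu a
  exact ⟨w, hw, degree_lt_of_degree_sum_mul_lt_of_isUnit_coeff hf hd hu hw (haw ▸ hdeg), haw⟩

end CommRing

/-- if `f_1, …, f_t ∈ K[x,y]` (`t ≥ 2`) all have `y`-degree at most `d_y`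
and the coefficient of `y^{d_y}` in `f_t` is a nonzero element of `K`, then every `f`
in `⟨f_1, …, f_t⟩` with `deg_y f < 2 d_y` can be written as `f = w_1 f_1 + … + w_t f_t`
with all `w_i` of `y`-degree `< d_y`. -/
theorem low_degree_membership {K : Type*} [Field K] {t0 : ℕ}
    (f : Fin (t0 + 2) → Biv K) (dy : ℕ)
    (hdy : ∀ i, (f i).natDegree ≤ dy)
    (hc : ∃ c : K, c ≠ 0 ∧ (f (Fin.last (t0 + 1))).coeff dy = Polynomial.C c) :
    ∀ h ∈ Ideal.span (Set.range f), h.degree < ((2 * dy : ℕ) : WithBot ℕ) →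
      ∃ w : Fin (t0 + 2) → Biv K,
        (∀ i, (w i).degree < (dy : WithBot ℕ)) ∧ h = ∑ i, w i * f i := by
  obtain ⟨c, hc₀, hc⟩ := hc
  intro h hmem hdeg
  have hf i : (f i).degree ≤ dy := degree_le_of_natDegree_le (hdy i)
  have hu : IsUnit ((f (Fin.last (t0 + 1))).coeff dy) := hc ▸ isUnit_C.2 hc₀.isUnit
  obtain ⟨w, hw, hwlast, hsum⟩ :=
    low_degree_membership_general (fun i _ ↦ hf i) (hf _) hu hmem (two_mul dy ▸ hdeg)
  exact ⟨w, fun i ↦ (eq_or_ne i _).elim (fun hi ↦ hi ▸ hwlast) (hw i), hsum⟩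
end
end

section
/- Let K be a field and F = (f_1,…,f_t) in K[x,y] (t ≥ 2) of total degree at most d ≥ 1, generating an ideal I with finitely many common zeros over an algebraic closure of K. Then Δ(F) ≤ 16d′⁴ + 2d′² + 2d′, where d′ = max(d,3). -/
noncomputable section

open Polynomial

variable {k : Type*} [CommRing k]

/-- The total degree of a bivariate polynomial `f ∈ k[x][y]`. -/
def totDeg {k : Type*} [CommRing k] (f : Biv k) : ℕ :=
  f.support.sup fun j => j + (f.coeff j).natDegree

/-- Evaluation of `f ∈ K[x][y]` at a point `(a, b)` of the algebraic closure of `K`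
(`a` is the value of `x`, `b` the value of `y`). -/
def aEval {K : Type*} [Field K] (a b : AlgebraicClosure K) (f : Biv K) :
    AlgebraicClosure K :=
  Polynomial.eval₂
    (Polynomial.eval₂RingHom (algebraMap K (AlgebraicClosure K)) a) b f

/-!
The bound comes from eliminating `x`. Since `I` has finitely many zeros, the Nullstellensatz puts a
nonzero polynomial in `y` alone into `I`, so the `f j` generate the unit ideal of `K(y)[x]`. If they
have `x`-degree at most `m` and `y`-degree at most `n`, then `1` is a combination of the `f j` with
cofactors of `x`-degree `< m`, that is, a solution of a linear system with `2 * m` equations whose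
entries are polynomials in `y` of degree at most `n`. Cramer's rule applied to a maximal nonzero
minor of that system clears denominators: `I` contains a monic `R ∈ K[y]` with cofactors of
`y`-degree at most `2 * m * n`.

As `R` is monic in `y`, the Gröbner basis satisfies `n_0 ≤ deg R`, so each `A i` has `y`-degree at
most `deg R`. Dividing arbitrary cofactors of `A i` by `R`, and rewriting the multiple of `R` that
is left over in terms of the cofactors of `R`, leaves cofactors of `y`-degree `< n + 2 * m * n`.
-/

section LinearAlgebra

variable {m n : Type*}

theorem exists_submatrix_det_ne_zero_of_linearIndependent_col [Finite m] {L κ : Type*} [Field L]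
    [Fintype κ] [DecidableEq κ] {B : Matrix m κ L} (hB : LinearIndependent L B.col) :
    ∃ b : κ → m, (B.submatrix b id).det ≠ 0 := by
  have := Fintype.ofFinite m
  have hrank : Module.finrank L (Submodule.span L (Set.range B.row)) = Fintype.card κ := by
    rw [← B.rank_eq_finrank_span_row, ← B.rank_transpose]
    exact LinearIndependent.rank_matrix (M := B.transpose) hB
  obtain ⟨v, hv_mem, -, hv_indep⟩ :=
    Submodule.exists_fun_fin_finrank_span_eq L (Set.range B.row)
  choose b hb using hv_mem
  obtain rfl : B.row ∘ b = v := funext hb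
  let σ : κ ≃ Fin (Module.finrank L (Submodule.span L (Set.range B.row))) :=
    Fintype.equivFinOfCardEq hrank.symm
  refine ⟨b ∘ σ, IsUnit.ne_zero ?_⟩
  rw [← Matrix.isUnit_iff_isUnit_det, ← Matrix.linearIndependent_rows_iff_isUnit]
  exact hv_indep.comp σ σ.injective

theorem exists_submatrix_det_ne_zero_and_span_col_eq [Fintype m] {L : Type*} [Field L]
    (A : Matrix m n L) :
    ∃ (r : ℕ) (b : Fin r → m) (a : Fin r → n), r ≤ Fintype.card m ∧
      (A.submatrix b a).det ≠ 0 ∧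
      Submodule.span L (Set.range (A.submatrix id a).col) =
        Submodule.span L (Set.range A.col) := by
  obtain ⟨c, hc_mem, hc_span, hc_indep⟩ :=
    Submodule.exists_fun_fin_finrank_span_eq L (Set.range A.col)
  choose a ha using hc_mem
  obtain rfl : (A.submatrix id a).col = c := funext ha
  obtain ⟨b, hb⟩ := exists_submatrix_det_ne_zero_of_linearIndependent_col hc_indep
  exact ⟨_, b, a, (Submodule.finrank_le _).trans (Module.finrank_fintype_fun_eq_card L).le,
    hb, hc_span⟩

open Matrix in
theorem exists_mulVec_cramer_submatrix_eq [Fintype m] [Fintype n] {R L : Type*} [CommRing R]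
    [Field L] [Algebra R L] [FaithfulSMul R L] (A : Matrix m n R) (e : m → R) (x : n → L)
    (hx : (A.map (algebraMap R L)) *ᵥ x = algebraMap R L ∘ e) :
    ∃ (r : ℕ) (b : Fin r → m) (a : Fin r → n), r ≤ Fintype.card m ∧
      (A.submatrix b a).det ≠ 0 ∧
      A.submatrix id a *ᵥ (A.submatrix b a).cramer (e ∘ b) = (A.submatrix b a).det • e := by
  set φ := algebraMap R L
  obtain ⟨r, b, a, hr, hdet, hspan⟩ := exists_submatrix_det_ne_zero_and_span_col_eq (A.map φ)
  set S := A.submatrix b a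
  have hφdet : ((A.map φ).submatrix b a).det = φ S.det := (φ.map_det S).symm
  obtain ⟨y, hy⟩ : ∃ y, (A.map φ).submatrix id a *ᵥ y = φ ∘ e := by
    have hmem : φ ∘ e ∈ Submodule.span L (Set.range (A.map φ).col) := by
      rw [← hx, ← range_mulVecLin]
      exact ⟨x, rfl⟩
    rwa [← hspan, ← range_mulVecLin] at hmem
  have hcramer : φ ∘ S.cramer (e ∘ b) = φ S.det • y := by
    have hyb : S.map φ *ᵥ y = φ ∘ e ∘ b := funext fun k => congrFun hy (b k)
    calc φ ∘ S.cramer (e ∘ b) = S.adjugate.map φ *ᵥ (φ ∘ e ∘ b) := by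
          rw [cramer_eq_adjugate_mulVec]; exact funext (φ.map_mulVec _ _)
      _ = ((S.map φ).adjugate * S.map φ) *ᵥ y := by
          rw [← hyb, mulVec_mulVec]; congr 2; exact φ.map_adjugate S
      _ = φ S.det • y := by rw [adjugate_mul, smul_mulVec, one_mulVec, ← hφdet]; rfl
  refine ⟨r, b, a, hr, fun h => hdet (by rw [hφdet, h, map_zero]), funext fun i => ?_⟩
  apply FaithfulSMul.algebraMap_injective R L
  calc φ ((A.submatrix id a *ᵥ S.cramer (e ∘ b)) i)
      = ((A.map φ).submatrix id a *ᵥ (φ ∘ S.cramer (e ∘ b))) i := φ.map_mulVec _ _ i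
    _ = φ S.det * φ (e i) := by rw [hcramer, mulVec_smul, hy]; rfl
    _ = φ ((S.det • e) i) := (map_mul φ _ _).symm

theorem natDegree_det_le {R κ : Type*} [CommRing R] [Fintype κ] [DecidableEq κ] {d : ℕ}
    {M : Matrix κ κ R[X]} (hM : ∀ i j, (M i j).natDegree ≤ d) :
    M.det.natDegree ≤ Fintype.card κ * d := by
  rw [Matrix.det_apply]
  refine natDegree_sum_le_of_forall_le _ _ fun σ _ => (natDegree_smul_le _ _).trans ?_
  calc (∏ i, M (σ i) i).natDegree ≤ ∑ i, (M (σ i) i).natDegree := natDegree_prod_le _ _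
    _ ≤ Fintype.card κ * d := Finset.sum_le_card_nsmul _ _ d fun i _ => hM _ _

theorem natDegree_cramer_le {R κ : Type*} [CommRing R] [Fintype κ] [DecidableEq κ] {d : ℕ}
    {M : Matrix κ κ R[X]} {e : κ → R[X]} (hM : ∀ i j, (M i j).natDegree ≤ d)
    (he : ∀ i, (e i).natDegree ≤ d) (k : κ) :
    (M.cramer e k).natDegree ≤ Fintype.card κ * d := by
  rw [Matrix.cramer_apply]
  refine natDegree_det_le fun i j => ?_
  rw [Matrix.updateCol_apply]
  split_ifs
  exacts [he i, hM i j]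

open Matrix in
theorem exists_mulVec_eq_smul_natDegree_le [Fintype m] [Fintype n] {R L : Type*} [CommRing R]
    [Field L] [Algebra R[X] L] [FaithfulSMul R[X] L] {A : Matrix m n R[X]} {e : m → R[X]} {d : ℕ}
    (hA : ∀ i j, (A i j).natDegree ≤ d) (he : ∀ i, (e i).natDegree ≤ d) {x : n → L}
    (hx : A.map (algebraMap R[X] L) *ᵥ x = algebraMap R[X] L ∘ e) :
    ∃ (D : R[X]) (c : n → R[X]), D ≠ 0 ∧ D.natDegree ≤ Fintype.card m * d ∧
      (∀ i, (c i).natDegree ≤ Fintype.card m * d) ∧ A *ᵥ c = D • e := by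
  classical
  obtain ⟨r, b, a, hr, hdet, hsol⟩ := exists_mulVec_cramer_submatrix_eq A e x hx
  have hrd : Fintype.card (Fin r) * d ≤ Fintype.card m * d := by
    rw [Fintype.card_fin]; gcongr
  have hsub : ∀ i j, (A.submatrix b a i j).natDegree ≤ d := fun i j => hA _ _
  set c := (A.submatrix b a).cramer (e ∘ b)
  refine ⟨_, ∑ k, Pi.single (a k) (c k), hdet, (natDegree_det_le hsub).trans hrd, fun i => ?_, ?_⟩
  · rw [Finset.sum_apply]
    refine natDegree_sum_le_of_forall_le _ _ fun k _ => ?_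
    rw [Pi.single_apply]
    split_ifs
    · exact (natDegree_cramer_le hsub (fun i => he _) k).trans hrd
    · simp
  · rw [← hsol, mulVec_sum, mulVec_eq_sum]
    simp only [mulVec_single]
    rfl

end LinearAlgebra

theorem degree_mul_lt_add {A : Type*} [Semiring A] {p q : A[X]} {a b : ℕ}
    (hp : p.degree < (a : WithBot ℕ)) (hq : q.natDegree ≤ b) :
    (p * q).degree < ((a + b : ℕ) : WithBot ℕ) :=
  calc (p * q).degree ≤ p.degree + q.degree := degree_mul_le _ _
    _ ≤ p.degree + (b : WithBot ℕ) := by gcongr; exact degree_le_of_natDegree_le hq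
    _ < ((a + b : ℕ) : WithBot ℕ) := WithBot.add_lt_add_right WithBot.coe_ne_bot hp

theorem degree_sum_lt {A ι : Type*} [Semiring A] {s : Finset ι} {p : ι → A[X]} {a : ℕ}
    (hp : ∀ j ∈ s, (p j).degree < (a : WithBot ℕ)) : (∑ j ∈ s, p j).degree < (a : WithBot ℕ) :=
  (degree_sum_le _ _).trans_lt ((Finset.sup_lt_iff (WithBot.bot_lt_coe a)).2 hp)

theorem exists_cofactors_degree_lt {A ι : Type*} [CommRing A] [Nontrivial A] [Fintype ι]
    {f u : ι → A[X]} {h : A[X]} {d N : ℕ} (hf : ∀ j, (f j).natDegree ≤ d)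
    (hu : ∀ j, (u j).natDegree ≤ N) (hmonic : (∑ j, u j * f j).Monic)
    (hspan : h ∈ Ideal.span (Set.range f))
    (hh : h.degree < ((∑ j, u j * f j).natDegree + d : ℕ)) :
    ∃ w : ι → A[X], (∀ j, (w j).degree < ((d + N : ℕ) : WithBot ℕ)) ∧ ∑ j, w j * f j = h := by
  obtain ⟨w, rfl⟩ := Ideal.mem_span_range_iff_exists_fun.1 hspan
  set R := ∑ j, u j * f j with hR
  set Q := ∑ j, (w j /ₘ R) * f j with hQ
  have hRdeg : R.natDegree ≤ d + N := natDegree_sum_le_of_forall_le _ _ fun j _ =>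
    natDegree_mul_le.trans (by have := hu j; have := hf j; omega)
  have hmod (j : ι) : (w j %ₘ R).degree < (R.natDegree : WithBot ℕ) :=
    (degree_modByMonic_lt _ hmonic).trans_le degree_le_natDegree
  have hdiv : ∑ j, w j * f j - ∑ j, (w j %ₘ R) * f j = Q * R := by
    rw [hQ, Finset.sum_mul, ← Finset.sum_sub_distrib]
    refine Finset.sum_congr rfl fun j _ => ?_
    linear_combination -f j * modByMonic_add_div (w j) R
  have hQdeg : Q.degree < (d : WithBot ℕ) := by
    have hQR : (Q * R).degree < ((R.natDegree + d : ℕ) : WithBot ℕ) := by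
      rw [← hdiv]
      exact (degree_sub_le _ _).trans_lt
        (max_lt hh (degree_sum_lt fun j _ => degree_mul_lt_add (hmod j) (hf j)))
    rw [hmonic.degree_mul, degree_eq_natDegree hmonic.ne_zero, add_comm, Nat.cast_add] at hQR
    exact lt_of_add_lt_add_left hQR
  refine ⟨fun j => w j %ₘ R + Q * u j, fun j => ?_, ?_⟩
  · exact (degree_add_le _ _).trans_lt (max_lt
      ((hmod j).trans_le (by exact_mod_cast hRdeg)) (degree_mul_lt_add hQdeg (hu j)))
  · calc ∑ j, (w j %ₘ R + Q * u j) * f j = ∑ j, (w j %ₘ R) * f j + Q * R := by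
          simp only [hR, add_mul, Finset.sum_add_distrib, Finset.mul_sum, mul_assoc]
      _ = ∑ j, w j * f j := by rw [← hdiv]; ring

theorem exists_bezout_degree_lt {L ι : Type*} [Field L] [Fintype ι] {f : ι → L[X]} {d : ℕ}
    (hd : 0 < d) (hf : ∀ j, (f j).natDegree ≤ d) (htop : Ideal.span (Set.range f) = ⊤) :
    ∃ w : ι → L[X], (∀ j, (w j).degree < (d : WithBot ℕ)) ∧ ∑ j, w j * f j = 1 := by
  classical
  obtain ⟨j₀, hj₀⟩ : ∃ j, f j ≠ 0 := by
    by_contra! hzero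
    have : Ideal.span (Set.range f) ≤ ⊥ := Ideal.span_le.2 (by rintro _ ⟨j, rfl⟩; exact hzero j)
    exact bot_ne_top (le_bot_iff.1 this ▸ htop)
  let u : ι → L[X] := Pi.single j₀ (C (f j₀).leadingCoeff⁻¹)
  have hu (j : ι) : (u j).natDegree ≤ 0 := by
    simp only [u, Pi.single_apply]
    split_ifs <;> simp
  have hsum : ∑ j, u j * f j = f j₀ * C (f j₀).leadingCoeff⁻¹ := by
    simp [u, Pi.single_apply, mul_comm]
  refine exists_cofactors_degree_lt hf hu (hsum ▸ monic_mul_leadingCoeff_inv hj₀)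
    (htop ▸ Submodule.mem_top) ?_
  rw [degree_one]
  exact_mod_cast (by omega)

section Sylvester

open Matrix

variable {A ι : Type*} [CommRing A]

/-- The polynomial of degree `< m` with coefficients `v`. -/
def polyOfCoeffs {m : ℕ} (v : Fin m → A) : A[X] := ∑ a : Fin m, C (v a) * X ^ (a : ℕ)

theorem degree_polyOfCoeffs_lt {m : ℕ} (v : Fin m → A) :
    (polyOfCoeffs v).degree < (m : WithBot ℕ) :=
  degree_sum_fin_lt v

theorem polyOfCoeffs_coeff {m : ℕ} {p : A[X]} (hp : p.degree < (m : WithBot ℕ)) :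
    polyOfCoeffs (fun a : Fin m => p.coeff a) = p := by
  by_cases hzero : p = 0
  · simp [hzero, polyOfCoeffs]
  · exact (Fin.sum_univ_eq_sum_range (fun a => C (p.coeff a) * X ^ a) m).trans
      (as_sum_range_C_mul_X_pow' p ((natDegree_lt_iff_degree_lt hzero).2 hp)).symm

theorem natDegree_coeff_polyOfCoeffs_le {m n : ℕ} {v : Fin m → A[X]}
    (hv : ∀ a, (v a).natDegree ≤ n) (r : ℕ) : ((polyOfCoeffs v).coeff r).natDegree ≤ n := by
  rw [polyOfCoeffs, finsetSum_coeff]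
  refine natDegree_sum_le_of_forall_le _ _ fun a _ => ?_
  rw [coeff_C_mul_X_pow]
  split_ifs
  · exact hv a
  · simp

/-- A generalised Sylvester matrix: the matrix of the linear map sending the coefficients of
cofactors `w j` of degree `< m` to the coefficients of `∑ j, w j * F j` in degrees `< 2 * m`.
The column `(j, a)` holds the coefficients of `X ^ a * F j`. -/
def sylvesterMatrix (F : ι → A[X]) (m : ℕ) : Matrix (Fin (2 * m)) (ι × Fin m) A :=
  Matrix.of fun r q => (X ^ (q.2 : ℕ) * F q.1).coeff r

theorem sylvesterMatrix_map {B : Type*} [CommRing B] (φ : A →+* B) (F : ι → A[X]) (m : ℕ) :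
    (sylvesterMatrix F m).map φ = sylvesterMatrix (fun j => (F j).map φ) m := by
  ext r q
  simp [sylvesterMatrix, coeff_X_pow_mul', apply_ite φ]

theorem natDegree_sylvesterMatrix_le {F : ι → A[X][X]} {n : ℕ}
    (hF : ∀ j r, ((F j).coeff r).natDegree ≤ n) (m : ℕ) (r : Fin (2 * m)) (q : ι × Fin m) :
    (sylvesterMatrix F m r q).natDegree ≤ n := by
  simp only [sylvesterMatrix, of_apply, coeff_X_pow_mul']
  split_ifs
  · exact hF _ _
  · simp

theorem span_range_map_eq_top {K : Type*} [Field K] [Algebra A K] [FaithfulSMul A K]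
    {F : ι → A[X]} {p : A} (hp : p ≠ 0) (hmem : C p ∈ Ideal.span (Set.range F)) :
    Ideal.span (Set.range fun j => (F j).map (algebraMap A K)) = ⊤ := by
  have hunit : IsUnit (mapRingHom (algebraMap A K) (C p)) := by
    have hne : algebraMap A K p ≠ 0 := by simpa using hp
    simpa using hne.isUnit
  have hmap := Ideal.mem_map_of_mem (mapRingHom (algebraMap A K)) hmem
  rw [Ideal.map_span, ← Set.range_comp] at hmap
  exact Ideal.eq_top_of_isUnit_mem _ hmap hunit

variable [Fintype ι] {F : ι → A[X]} {m : ℕ}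

theorem sylvesterMatrix_mulVec (c : ι × Fin m → A) (r : Fin (2 * m)) :
    (sylvesterMatrix F m *ᵥ c) r = (∑ j, polyOfCoeffs (fun a => c (j, a)) * F j).coeff r := by
  simp only [mulVec, dotProduct, sylvesterMatrix, of_apply, Fintype.sum_prod_type,
    finsetSum_coeff, polyOfCoeffs, Finset.sum_mul, mul_assoc, coeff_C_mul, mul_comm (c _)]

theorem exists_sylvesterMatrix_mulVec_eq_one {L : Type*} [Field L] {F : ι → L[X]} (hm : 0 < m)
    (hF : ∀ j, (F j).natDegree ≤ m) (htop : Ideal.span (Set.range F) = ⊤) :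
    ∃ x, sylvesterMatrix F m *ᵥ x = fun r : Fin (2 * m) => (1 : L[X]).coeff r := by
  obtain ⟨w, hw, hsum⟩ := exists_bezout_degree_lt hm hF htop
  refine ⟨fun q => (w q.1).coeff q.2, funext fun r => ?_⟩
  simp only [sylvesterMatrix_mulVec, polyOfCoeffs_coeff (hw _), hsum]

theorem sum_polyOfCoeffs_mul_eq (hF : ∀ j, (F j).natDegree ≤ m)
    {c : ι × Fin m → A} {p : A[X]} (hp : p.degree < ((2 * m : ℕ) : WithBot ℕ))
    (hc : sylvesterMatrix F m *ᵥ c = fun r : Fin (2 * m) => p.coeff r) :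
    ∑ j, polyOfCoeffs (fun a => c (j, a)) * F j = p := by
  have hdeg : (∑ j, polyOfCoeffs (fun a => c (j, a)) * F j).degree < (2 * m : ℕ) := by
    rw [two_mul]
    exact degree_sum_lt fun j _ => degree_mul_lt_add (degree_polyOfCoeffs_lt _) (hF j)
  rw [← polyOfCoeffs_coeff hdeg, ← polyOfCoeffs_coeff hp]
  exact congrArg polyOfCoeffs (funext fun r => by rw [← sylvesterMatrix_mulVec, hc])

theorem exists_C_eq_sum_mul_natDegree_coeff_le [IsDomain A] {F : ι → A[X][X]} {n : ℕ}
    (hm : 0 < m) (hF : ∀ j, (F j).natDegree ≤ m) (hcoeff : ∀ j r, ((F j).coeff r).natDegree ≤ n)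
    {p : A[X]} (hp : p ≠ 0) (hmem : C p ∈ Ideal.span (Set.range F)) :
    ∃ (D : A[X]) (u : ι → A[X][X]), D ≠ 0 ∧ D.natDegree ≤ 2 * m * n ∧
      (∀ j r, ((u j).coeff r).natDegree ≤ 2 * m * n) ∧ ∑ j, u j * F j = C D := by
  let L := FractionRing A[X]
  obtain ⟨x, hx⟩ := exists_sylvesterMatrix_mulVec_eq_one hm
    (fun j => natDegree_map_le.trans (hF j)) (span_range_map_eq_top (K := L) hp hmem)
  have hx' : (sylvesterMatrix F m).map (algebraMap A[X] L) *ᵥ x =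
      algebraMap A[X] L ∘ fun r : Fin (2 * m) => (1 : A[X][X]).coeff r := by
    rw [sylvesterMatrix_map, hx]
    ext r
    simp [coeff_one, apply_ite (algebraMap A[X] L)]
  have hone (r : Fin (2 * m)) : ((1 : A[X][X]).coeff r).natDegree ≤ n := by
    rw [coeff_one]
    split_ifs <;> simp
  obtain ⟨D, c, hD, hDdeg, hcdeg, hsol⟩ :=
    exists_mulVec_eq_smul_natDegree_le (natDegree_sylvesterMatrix_le hcoeff m) hone hx'
  rw [Fintype.card_fin] at hDdeg hcdeg
  refine ⟨D, fun j => polyOfCoeffs fun a => c (j, a), hD, hDdeg,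
    fun j => natDegree_coeff_polyOfCoeffs_le fun a => hcdeg (j, a),
    sum_polyOfCoeffs_mul_eq hF ?_ ?_⟩
  · exact degree_C_le.trans_lt (by exact_mod_cast (by omega : 0 < 2 * m))
  · rw [hsol]
    ext1 r
    rw [← mul_one (C D), coeff_C_mul]
    rfl

end Sylvester

section Swap

variable {R : Type*} [CommSemiring R]

theorem coeff_coeff_swap (p : R[X][X]) (a b : ℕ) :
    ((Bivariate.swap p).coeff a).coeff b = (p.coeff b).coeff a := by
  induction p using Polynomial.induction_on' with
  | add p q hp hq => simp [hp, hq]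
  | monomial n f =>
    induction f using Polynomial.induction_on' with
    | add p q hp hq => simp only [map_add, coeff_add, hp, hq]
    | monomial m r =>
      rw [Bivariate.swap_monomial_monomial]
      by_cases hm : m = a <;> by_cases hn : n = b <;> simp [hm, hn, coeff_monomial]

theorem natDegree_swap_le_iff {p : R[X][X]} {n : ℕ} :
    (Bivariate.swap p).natDegree ≤ n ↔ ∀ r, (p.coeff r).natDegree ≤ n := by
  simp only [natDegree_le_iff_coeff_eq_zero, Polynomial.ext_iff (q := 0), coeff_coeff_swap,
    coeff_zero]
  exact ⟨fun h r N hN => h N hN r, fun h N hN r => h r N hN⟩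

theorem natDegree_coeff_swap_le {p : R[X][X]} {n : ℕ} (hp : p.natDegree ≤ n) (r : ℕ) :
    ((Bivariate.swap p).coeff r).natDegree ≤ n :=
  natDegree_swap_le_iff.1 (by rwa [Bivariate.swap_swap_apply]) r

theorem swap_mem_span_range {ι : Type*} {f : ι → R[X][X]} {q : R[X][X]}
    (hq : q ∈ Ideal.span (Set.range f)) :
    Bivariate.swap q ∈ Ideal.span (Set.range fun j => Bivariate.swap (f j)) := by
  have hmap := Ideal.mem_map_of_mem Bivariate.swap hq
  rwa [Ideal.map_span, ← Set.range_comp] at hmap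

end Swap

section Elimination

variable {K : Type*} [Field K]

theorem aeval_equivMvPolynomial (z : Fin 2 → AlgebraicClosure K) (q : Biv K) :
    MvPolynomial.aeval z (Bivariate.equivMvPolynomial K q) = aEval (z 0) (z 1) q := by
  have hhom : (MvPolynomial.aeval z).toRingHom.comp
        (Bivariate.equivMvPolynomial K).toRingEquiv.toRingHom =
      eval₂RingHom (eval₂RingHom (algebraMap K (AlgebraicClosure K)) (z 0)) (z 1) := by
    ext <;> simp
  exact DFunLike.congr_fun hhom q

theorem mem_radical_of_forall_aEval_eq_zero {I : Ideal (Biv K)} {q : Biv K}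
    (hq : ∀ a b, (∀ h ∈ I, aEval a b h = 0) → aEval a b q = 0) : q ∈ I.radical := by
  let e := Bivariate.equivMvPolynomial K
  have hvanish : e q ∈ MvPolynomial.vanishingIdeal K
      (MvPolynomial.zeroLocus (AlgebraicClosure K) (I.comap e.symm)) := by
    intro z hz
    rw [aeval_equivMvPolynomial]
    refine hq _ _ fun h hh => ?_
    rw [← aeval_equivMvPolynomial]
    exact hz _ (by simpa [e] using hh)
  rw [MvPolynomial.vanishingIdeal_zeroLocus_eq_radical] at hvanish
  obtain ⟨N, hN⟩ := hvanish
  exact ⟨N, by simpa [e] using hN⟩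

theorem aEval_map_C (a b : AlgebraicClosure K) (p : K[X]) :
    aEval a b (p.map C) = aeval b p := by
  rw [aEval, eval₂_map, aeval_def]
  congr 1
  ext
  simp

theorem exists_map_C_mem_span_of_finite {ι : Type*} {f : ι → Biv K}
    (hfin : {b | ∃ a, ∀ j, aEval a b (f j) = 0}.Finite) :
    ∃ p : K[X], p ≠ 0 ∧ p.map C ∈ Ideal.span (Set.range f) := by
  let p : K[X] := ∏ b ∈ hfin.toFinset, minpoly K b
  have hp : p ≠ 0 := Finset.prod_ne_zero_iff.2 fun b _ =>
    minpoly.ne_zero (Algebra.IsIntegral.isIntegral b)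
  have hrad : p.map C ∈ (Ideal.span (Set.range f)).radical := by
    refine mem_radical_of_forall_aEval_eq_zero fun a b hzero => ?_
    have hb : b ∈ hfin.toFinset :=
      hfin.mem_toFinset.2 ⟨a, fun j => hzero _ (Ideal.subset_span ⟨j, rfl⟩)⟩
    rw [aEval_map_C, map_prod]
    exact Finset.prod_eq_zero hb (minpoly.aeval K b)
  obtain ⟨N, hN⟩ := hrad
  exact ⟨p ^ N, pow_ne_zero N hp, by rwa [Polynomial.map_pow]⟩

theorem exists_monic_sum_mul_natDegree_le {ι : Type*} [Fintype ι] {f : ι → Biv K} {m n : ℕ}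
    (hm : 0 < m) (hx : ∀ j r, ((f j).coeff r).natDegree ≤ m) (hy : ∀ j, (f j).natDegree ≤ n)
    (hfin : {b | ∃ a, ∀ j, aEval a b (f j) = 0}.Finite) :
    ∃ u : ι → Biv K, (∀ j, (u j).natDegree ≤ 2 * m * n) ∧ (∑ j, u j * f j).Monic := by
  obtain ⟨p, hp, hmem⟩ := exists_map_C_mem_span_of_finite hfin
  obtain ⟨D, u, hD, -, hu, hsum⟩ := exists_C_eq_sum_mul_natDegree_coeff_le hm
    (fun j => natDegree_swap_le_iff.2 (hx j)) (fun j => natDegree_coeff_swap_le (hy j)) hp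
    (Bivariate.swap_map_C p ▸ swap_mem_span_range hmem)
  refine ⟨fun j => C (C D.leadingCoeff⁻¹) * Bivariate.swap (u j), fun j => ?_, ?_⟩
  · exact (natDegree_C_mul_le _ _).trans (natDegree_swap_le_iff.2 (hu j))
  · have hswap : ∑ j, Bivariate.swap (u j) * f j = D.map C := by
      simpa only [map_sum, map_mul, Bivariate.swap_swap_apply, Bivariate.swap_C] using
        congrArg Bivariate.swap hsum
    have hmonic := (monic_mul_leadingCoeff_inv hD).map (C (R := K))
    rw [Polynomial.map_mul, map_C, mul_comm, ← hswap, Finset.mul_sum] at hmonic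
    simpa only [mul_assoc] using hmonic

end Elimination

section Detaching

variable {s : ℕ} {g : Fin (s + 1) → Biv k} {I : Ideal (Biv k)} {A : ℕ → Biv k}

theorem natDegree_le_totDeg (f : Biv k) : f.natDegree ≤ totDeg f := by
  by_cases hf : f = 0
  · simp [hf]
  · exact (Nat.le_add_right _ _).trans (Finset.le_sup (f := fun j => j + (f.coeff j).natDegree)
      (natDegree_mem_support_of_nonzero hf))

theorem natDegree_coeff_le_totDeg (f : Biv k) (r : ℕ) : (f.coeff r).natDegree ≤ totDeg f := by
  by_cases hr : f.coeff r = 0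
  · simp [hr]
  · exact (Nat.le_add_left _ _).trans (Finset.le_sup (f := fun j => j + (f.coeff j).natDegree)
      (mem_support_iff.2 hr))

theorem IsReducedGB.mem (hg : IsReducedGB g I) (j : Fin (s + 1)) : g j ∈ I :=
  (hg.1.1 (g j) (List.mem_ofFn.2 ⟨j, rfl⟩)).2

theorem IsReducedGB.natDegree_le_of_monic [Nontrivial k] (hg : IsReducedGB g I) {R : Biv k}
    (hR : R.Monic) (hRI : R ∈ I) : (g 0).natDegree ≤ R.natDegree := by
  obtain ⟨⟨-, hdvd⟩, hmonic, hreduced, hanti⟩ := hg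
  -- The leading monomial of `R` is a power of `y`, hence so is that of any `g j` dividing it. Such
  -- a `g j` must be `g 0`, whose leading monomial would otherwise be reducible by it.
  obtain ⟨_, hmem, hy, hx⟩ := hdvd R hRI hR.ne_zero
  obtain ⟨j, rfl⟩ := List.mem_ofFn.1 hmem
  obtain rfl | hj := eq_or_ne j 0
  · exact hy
  have hoccurs : occursIn (g 0) (lmon (g 0)) := by
    change (g 0).leadingCoeff.leadingCoeff ≠ 0
    rw [(hmonic 0).leadingCoeff]
    exact one_ne_zero
  have hx_zero : (lmon (g j)).2 = 0 := by
    simpa [lmon, hR.leadingCoeff] using hx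
  have hy_le : (lmon (g j)).1 ≤ (lmon (g 0)).1 :=
    (hanti 0 j (Fin.pos_of_ne_zero hj)).elim le_of_lt fun h => h.1.le
  exact absurd ⟨hy_le, hx_zero.trans_le (Nat.zero_le _)⟩ (hreduced 0 j hj.symm _ hoccurs)

theorem IsDetachingSeq.mem_and_natDegree_le (hA : IsDetachingSeq g I A) (hg : ∀ j, g j ∈ I)
    {i : ℕ} (hi : (g (Fin.last s)).natDegree ≤ i) : A i ∈ I ∧ (A i).natDegree ≤ i := by
  obtain ⟨-, hA_basis, hA_step⟩ := hA
  induction i, hi using Nat.le_induction with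
  | base => exact (hA_basis (Fin.last s)).symm ▸ ⟨hg _, le_rfl⟩
  | succ i hi ih =>
    by_cases hbasis : ∃ j, (g j).natDegree = i + 1
    · obtain ⟨j, hj⟩ := hbasis
      rw [← hj, hA_basis]
      exact ⟨hg j, le_rfl⟩
    · obtain ⟨hmem, hdeg, -⟩ := hA_step (i + 1) (by omega) (not_exists.1 hbasis)
      rw [Nat.add_sub_cancel] at hmem hdeg
      rw [← sub_add_cancel (A (i + 1)) (X * A i)]
      refine ⟨add_mem hmem (I.mul_mem_left _ ih.1), (natDegree_add_le _ _).trans (max_le ?_ ?_)⟩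
      · exact natDegree_le_of_degree_le hdeg.le
      · exact natDegree_mul_le.trans (by have := natDegree_X_le (R := k[X]); omega)

end Detaching

theorem Delta_le_general_general {K ι : Type*} [Field K] [Fintype ι] {s m n : ℕ} (hm : 0 < m)
    (hn : 0 < n) {f : ι → Biv K} (hx : ∀ j r, ((f j).coeff r).natDegree ≤ m)
    (hy : ∀ j, (f j).natDegree ≤ n) (hfin : {b | ∃ a, ∀ j, aEval a b (f j) = 0}.Finite)
    {g : Fin (s + 1) → Biv K} (hg : IsReducedGB g (Ideal.span (Set.range f))) {A : ℕ → Biv K}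
    (hA : IsDetachingSeq g (Ideal.span (Set.range f)) A) {i : ℕ}
    (hi : (g (Fin.last s)).natDegree ≤ i) (hi₀ : i ≤ (g 0).natDegree) :
    ∃ w : ι → Biv K, (∀ j, (w j).degree < ((n + 2 * m * n : ℕ) : WithBot ℕ)) ∧
      ∑ j, w j * f j = A i := by
  obtain ⟨u, hu, hmonic⟩ := exists_monic_sum_mul_natDegree_le hm hx hy hfin
  obtain ⟨hmem, hdeg⟩ := hA.mem_and_natDegree_le hg.mem hi
  have hg₀ := hg.natDegree_le_of_monic hmonic (Ideal.mem_span_range_iff_exists_fun.2 ⟨u, rfl⟩)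
  refine exists_cofactors_degree_lt hy hu hmonic hmem (degree_le_natDegree.trans_lt ?_)
  exact_mod_cast (by omega)

/-- if `F = (f_1, …, f_t)` (`t ≥ 2`) have total degree at most `d ≥ 1` and
generate an ideal `I` with finitely many common zeros over an algebraic closure of `K`,
then `Δ(F) ≤ 16 d′⁴ + 2 d′² + 2 d′` with `d′ = max(d,3)`: every element `A i`
(`n_s ≤ i ≤ n_0`) of the detaching basis of `I` is a combination of the `f_j` with
cofactors of `y`-degree `< 16 d′⁴ + 2 d′² + 2 d′`. -/
theorem Delta_le_general {K : Type*} [Field K] {t s : ℕ} (ht : 2 ≤ t)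
    (f : Fin t → Biv K) (d : ℕ) (hd : 1 ≤ d)
    (htot : ∀ i, totDeg (f i) ≤ d)
    (hfin : {p : AlgebraicClosure K × AlgebraicClosure K |
      ∀ i, aEval p.1 p.2 (f i) = 0}.Finite)
    (I : Ideal (Biv K)) (hI : I = Ideal.span (Set.range f))
    (g : Fin (s + 1) → Biv K) (hg : IsReducedGB g I)
    (A : ℕ → Biv K) (hA : IsDetachingSeq g I A) :
    ∀ i, (g (Fin.last s)).natDegree ≤ i → i ≤ (g 0).natDegree →
      ∃ w : Fin t → Biv K,
        (∀ j, (w j).degree <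
          ((16 * (max d 3) ^ 4 + 2 * (max d 3) ^ 2 + 2 * max d 3 : ℕ) : WithBot ℕ)) ∧
        A i = ∑ j, w j * f j := by
  subst hI
  intro i hi hi₀
  obtain ⟨w, hw, hsum⟩ := Delta_le_general_general hd hd
    (fun j r => (natDegree_coeff_le_totDeg (f j) r).trans (htot j))
    (fun j => (natDegree_le_totDeg (f j)).trans (htot j))
    ((hfin.image Prod.snd).subset fun b ⟨a, hab⟩ => ⟨(a, b), hab, rfl⟩) hg hA hi hi₀
  have hbound : d + 2 * d * d ≤ 16 * (max d 3) ^ 4 + 2 * (max d 3) ^ 2 + 2 * max d 3 := by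
    have hd' : d ≤ max d 3 := le_max_left d 3
    nlinarith
  exact ⟨w, fun j => (hw j).trans_le (Nat.cast_le.2 hbound), hsum.symm⟩
end
end
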